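/- arXiv:math/0401177 — 4 statements merged into one kernel-verified Lean document; each statement's English description precedes it below -/
import Mathlib

section
/- Let n ≥ 1, let P be a column-stochastic n×n real matrix, let 0 < α < 1, and let v ∈ ℝⁿ have non-negative entries with eᵀv = 1. Set A = αP + (1−α)v eᵀ. Then for every real number t, (t − α) · det(t·I − A) = αⁿ · (t − 1) · det((t/α)·I − P). (Equivalently, as polynomials, (X − α)·charpoly(A) = αⁿ·(X − 1)·charpoly(P)∘(X/α); this encodes that the eigenvalues of A are 1, αλ₂, …, αλₙ when those of P are 1, λ₂, …, λₙ.) -/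
/-- For the Google matrix `A = α•P + (1-α)•v eᵀ` built from a
column-stochastic matrix `P`, for every real `t`,
`(t - α) * det(t•I - A) = α^n * (t - 1) * det((t/α)•I - P)`. -/
theorem google_det_identity (n : ℕ) (hn : 1 ≤ n)
    (P : Matrix (Fin n) (Fin n) ℝ)
    (hPnonneg : ∀ i j, 0 ≤ P i j) (hPcol : ∀ j, ∑ i, P i j = 1)
    (α : ℝ) (hα0 : 0 < α) (hα1 : α < 1)
    (v : Fin n → ℝ) (hvnonneg : ∀ i, 0 ≤ v i) (hvsum : ∑ i, v i = 1)
    (A : Matrix (Fin n) (Fin n) ℝ)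
    (hA : A = α • P + (1 - α) • Matrix.vecMulVec v (fun _ => (1 : ℝ))) :
    ∀ t : ℝ,
      (t - α) * (t • (1 : Matrix (Fin n) (Fin n) ℝ) - A).det
        = α ^ n * (t - 1) * ((t / α) • (1 : Matrix (Fin n) (Fin n) ℝ) - P).det := by
  intro t
  have hα : α ≠ 0 := hα0.ne'
  have hM : ((t • (1 : Matrix (Fin n) (Fin n) ℝ) - α • P)).det
      = α ^ n * ((t / α) • (1 : Matrix (Fin n) (Fin n) ℝ) - P).det := by
    have h : t • (1 : Matrix (Fin n) (Fin n) ℝ) - α • P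
        = α • ((t / α) • (1 : Matrix (Fin n) (Fin n) ℝ) - P) := by
      rw [smul_sub, smul_smul, mul_div_cancel₀ _ hα]
    rw [h, Matrix.det_smul, Fintype.card_fin]
  have he : Matrix.vecMul (fun _ => (1 : ℝ)) (t • (1 : Matrix (Fin n) (Fin n) ℝ) - α • P)
      = (t - α) • (fun _ => (1 : ℝ)) := by
    ext j
    simp [Matrix.vecMul, dotProduct, Finset.sum_sub_distrib, ← Finset.mul_sum, hPcol,
      Matrix.one_apply]
  rw [mul_right_comm, ← hM]
  by_cases ht : t = α
  · have h0 : (t • (1 : Matrix (Fin n) (Fin n) ℝ) - α • P).det = 0 := by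
      rw [← Matrix.exists_vecMul_eq_zero_iff]
      refine ⟨fun _ => 1, ?_, ?_⟩
      · intro h
        have := congrFun h ⟨0, hn⟩
        simp at this
      · rw [he, ht, sub_self, zero_smul]
    rw [h0, ht]
    simp
  · have ht' : t - α ≠ 0 := sub_ne_zero.mpr ht
    have hB : t • (1 : Matrix (Fin n) (Fin n) ℝ) - A
        = (1 + Matrix.replicateCol Unit ((-((1 - α) / (t - α))) • v)
            * Matrix.replicateRow Unit (fun _ => (1 : ℝ)))
          * (t • (1 : Matrix (Fin n) (Fin n) ℝ) - α • P) := by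
      rw [← Matrix.vecMulVec_eq, add_mul, one_mul, Matrix.vecMulVec_mul, he, hA]
      ext i j
      simp [Matrix.vecMulVec_apply]
      field_simp
      ring
    rw [hB, Matrix.det_mul, Matrix.det_one_add_replicateCol_mul_replicateRow]
    have hd : (fun _ => (1 : ℝ)) ⬝ᵥ ((-((1 - α) / (t - α))) • v) = -((1 - α) / (t - α)) := by
      simp [dotProduct, ← Finset.mul_sum, hvsum]
    rw [hd]
    field_simp
    ring
end

section
/- Let n ≥ 1, let P be a column-stochastic n×n real matrix, let 0 < α < 1, and let v ∈ ℝⁿ have non-negative entries with eᵀv = 1. Set A = αP + (1−α)v eᵀ. Regard P and A as complex matrices and let roots(P) and roots(A) denote the multisets of complex roots (with multiplicity) of their characteristic polynomials. Then 1 ∈ roots(P), and roots(A) = {1} + α · (roots(P) with one copy of 1 removed), where α · S denotes the multiset obtained by multiplying every element of S by α. -/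
open Polynomial in
theorem aux_charpoly_smul {n : ℕ} (M : Matrix (Fin n) (Fin n) ℂ) (a : ℂ) (ha : a ≠ 0) :
    (a • M).charpoly = M.charpoly.scaleRoots a := by
  apply Polynomial.funext
  intro x
  obtain ⟨y, rfl⟩ : ∃ y, x = a * y := ⟨a⁻¹ * x, by field_simp⟩
  rw [Polynomial.scaleRoots_eval_mul, Matrix.charpoly_natDegree_eq_dim, Matrix.eval_charpoly,
    Matrix.eval_charpoly, ← Matrix.det_smul]
  congr 1
  ext i j
  by_cases h : i = j <;> simp [h, mul_sub]

open Polynomial in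
theorem aux_key {m : ℕ} (Q : Matrix (Fin (m + 1)) (Fin (m + 1)) ℂ) (a : ℂ)
    (hQ : ∀ j, ∑ i, Q i j = a) (u : Fin (m + 1) → ℂ) (hu : ∑ i, u i = 1 - a) :
    (X - C a) * (Q + Matrix.vecMulVec u (fun _ => (1 : ℂ))).charpoly
      = (X - C 1) * Q.charpoly := by
  have h0 : (X - C a) ^ m ≠ (0 : ℂ[X]) := pow_ne_zero _ (X_sub_C_ne_zero a)
  apply mul_left_cancel₀ h0
  apply Polynomial.funext
  intro x
  have hmat : (x - a) • (Matrix.scalar (Fin (m + 1)) x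
        - (Q + Matrix.vecMulVec u (fun _ => (1 : ℂ))))
      = (Matrix.scalar (Fin (m + 1)) (x - a) - Matrix.vecMulVec u (fun _ => (1 : ℂ)))
        * (Matrix.scalar (Fin (m + 1)) x - Q) := by
    have h1 : Matrix.vecMulVec u (fun _ => (1 : ℂ)) * Q
        = a • Matrix.vecMulVec u (fun _ => (1 : ℂ)) := by
      ext i j
      simp [Matrix.mul_apply, Matrix.vecMulVec_apply, ← Finset.mul_sum, hQ, mul_comm a]
    have h2 : ∀ t : ℂ, Matrix.scalar (Fin (m + 1)) t = t • 1 := by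
      intro t
      exact (Matrix.smul_one_eq_diagonal t).symm
    rw [h2, h2, sub_mul, mul_sub, mul_sub, h1]
    simp only [smul_mul_assoc, mul_smul_comm, one_mul, mul_one]
    module
  have hdet := congrArg Matrix.det hmat
  rw [Matrix.det_smul, Matrix.det_mul, ← Matrix.eval_charpoly, ← Matrix.eval_charpoly,
    ← Matrix.eval_charpoly, Matrix.charpoly_vecMulVec] at hdet
  simp only [dotProduct, mul_one, hu, Fintype.card_fin, eval_sub, eval_smul, eval_pow, eval_X,
    Nat.add_sub_cancel, smul_eq_mul] at hdet
  simp only [eval_mul, eval_pow, eval_sub, eval_X, eval_C]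
  linear_combination hdet

/-- For the Google matrix `A = α•P + (1-α)•v eᵀ`, regarding `P` and `A`
as complex matrices, `1` is a root of the characteristic polynomial of `P`, and the
multiset of roots of `charpoly A` equals `{1}` together with `α` times the multiset of
roots of `charpoly P` with one copy of `1` removed. -/
theorem google_charpoly_roots (n : ℕ) (hn : 1 ≤ n)
    (P : Matrix (Fin n) (Fin n) ℝ)
    (hPnonneg : ∀ i j, 0 ≤ P i j) (hPcol : ∀ j, ∑ i, P i j = 1)
    (α : ℝ) (hα0 : 0 < α) (hα1 : α < 1)
    (v : Fin n → ℝ) (hvnonneg : ∀ i, 0 ≤ v i) (hvsum : ∑ i, v i = 1)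
    (A : Matrix (Fin n) (Fin n) ℝ)
    (hA : A = α • P + (1 - α) • Matrix.vecMulVec v (fun _ => (1 : ℝ))) :
    (1 : ℂ) ∈ ((P.map (fun x : ℝ => (x : ℂ))).charpoly).roots ∧
    ((A.map (fun x : ℝ => (x : ℂ))).charpoly).roots
      = (1 : ℂ) ::ₘ
        (Multiset.map (fun z : ℂ => (α : ℂ) * z)
          ((((P.map (fun x : ℝ => (x : ℂ))).charpoly).roots).erase 1)) := by
  obtain ⟨m, rfl⟩ : ∃ m, n = m + 1 := ⟨n - 1, by omega⟩
  have hα : (α : ℂ) ≠ 0 := by exact_mod_cast hα0.ne'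
  set Q : Matrix (Fin (m + 1)) (Fin (m + 1)) ℂ := P.map (fun x : ℝ => (x : ℂ)) with hQ
  have hQcol : ∀ j, ∑ i, Q i j = 1 := by
    intro j
    have := hPcol j
    simp only [hQ, Matrix.map_apply]
    exact_mod_cast this
  have hmem : (1 : ℂ) ∈ Q.charpoly.roots := by
    rw [Polynomial.mem_roots Q.charpoly_monic.ne_zero, Polynomial.IsRoot, Matrix.eval_charpoly]
    apply Matrix.exists_vecMul_eq_zero_iff.mp
    refine ⟨fun _ => 1, fun h => one_ne_zero (congrFun h 0), ?_⟩
    ext j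
    simp [Matrix.vecMul, dotProduct, hQcol, Matrix.one_apply]
  refine ⟨hmem, ?_⟩
  have hAmap : A.map (fun x : ℝ => (x : ℂ)) = (α : ℂ) • Q
      + Matrix.vecMulVec (fun i => (1 - (α : ℂ)) * (v i : ℂ)) (fun _ => (1 : ℂ)) := by
    subst hA
    ext i j
    simp [hQ, Matrix.vecMulVec_apply]
  have hv : ∑ i, (v i : ℂ) = 1 := by exact_mod_cast hvsum
  have key := aux_key ((α : ℂ) • Q) α
    (by intro j; simp [← Finset.mul_sum, hQcol])
    (fun i => (1 - (α : ℂ)) * (v i : ℂ)) (by rw [← Finset.mul_sum, hv, mul_one])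
  rw [← hAmap, aux_charpoly_smul Q α hα] at key
  have hr := congrArg Polynomial.roots key
  rw [Polynomial.roots_mul (mul_ne_zero (Polynomial.X_sub_C_ne_zero _)
      (Matrix.charpoly_monic _).ne_zero),
    Polynomial.roots_mul (mul_ne_zero (Polynomial.X_sub_C_ne_zero _)
      (Polynomial.scaleRoots_ne_zero (Matrix.charpoly_monic _).ne_zero _)),
    Polynomial.roots_X_sub_C, Polynomial.roots_X_sub_C,
    Polynomial.roots_scaleRoots _ (isUnit_iff_ne_zero.mpr hα)] at hr
  rw [← Multiset.cons_erase hmem, Multiset.map_cons, mul_one, Multiset.singleton_add,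
    Multiset.singleton_add, Multiset.cons_swap] at hr
  exact (Multiset.cons_inj_right _).mp hr
end

section
/- Let n ≥ 1, let P be a column-stochastic n×n real matrix, let 0 < α < 1, and let v ∈ ℝⁿ have non-negative entries with eᵀv = 1. Set A = αP + (1−α)v eᵀ. If μ ∈ ℂ is an eigenvalue of A (viewed as a complex matrix) with μ ≠ 1, then μ/α is an eigenvalue of P. -/
theorem mem_roots_charpoly_iff_aux {n : ℕ} (M : Matrix (Fin n) (Fin n) ℂ) (μ : ℂ) :
    μ ∈ M.charpoly.roots ↔ ∃ x : Fin n → ℂ, x ≠ 0 ∧ ∀ i, ∑ j, M i j * x j = μ * x i := by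
  rw [Polynomial.mem_roots (Matrix.charpoly_monic M).ne_zero, Polynomial.IsRoot.def,
    Matrix.eval_charpoly, ← Matrix.exists_mulVec_eq_zero_iff]
  refine exists_congr fun x => and_congr_right fun _ => ?_
  rw [Matrix.sub_mulVec, sub_eq_zero, funext_iff]
  refine forall_congr' fun i => ?_
  have h : (Matrix.scalar (Fin n) μ).mulVec x i = μ * x i := by
    simp [Matrix.scalar_apply, Matrix.mulVec_diagonal]
  rw [h, eq_comm]
  rfl

/-- If `μ ≠ 1` is a complex eigenvalue of the Google matrix
`A = α•P + (1-α)•v eᵀ`, then `μ/α` is an eigenvalue of `P`. -/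
theorem google_eigenvalue_shift (n : ℕ) (hn : 1 ≤ n)
    (P : Matrix (Fin n) (Fin n) ℝ)
    (hPnonneg : ∀ i j, 0 ≤ P i j) (hPcol : ∀ j, ∑ i, P i j = 1)
    (α : ℝ) (hα0 : 0 < α) (hα1 : α < 1)
    (v : Fin n → ℝ) (hvnonneg : ∀ i, 0 ≤ v i) (hvsum : ∑ i, v i = 1)
    (A : Matrix (Fin n) (Fin n) ℝ)
    (hA : A = α • P + (1 - α) • Matrix.vecMulVec v (fun _ => (1 : ℝ)))
    (μ : ℂ) (hμ : μ ∈ ((A.map (fun x : ℝ => (x : ℂ))).charpoly).roots)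
    (hμ1 : μ ≠ 1) :
    μ / (α : ℂ) ∈ ((P.map (fun x : ℝ => (x : ℂ))).charpoly).roots := by
  rw [mem_roots_charpoly_iff_aux] at hμ ⊢
  obtain ⟨x, hx0, hx⟩ := hμ
  refine ⟨x, hx0, fun i => ?_⟩
  have hα : (α : ℂ) ≠ 0 := by exact_mod_cast hα0.ne'
  have hPc : ∀ j, ∑ i, (P i j : ℂ) = 1 := fun j => by exact_mod_cast hPcol j
  have hvc : ∑ i, (v i : ℂ) = 1 := by exact_mod_cast hvsum
  have key : ∀ i, (α : ℂ) * ∑ j, (P i j : ℂ) * x j + (1 - α) * v i * ∑ j, x j = μ * x i := by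
    intro i
    rw [← hx i, Finset.mul_sum, Finset.mul_sum, ← Finset.sum_add_distrib]
    refine Finset.sum_congr rfl fun j _ => ?_
    simp [hA, Matrix.vecMulVec_apply]
    ring
  have hsP : ∑ i, ∑ j, (P i j : ℂ) * x j = ∑ j, x j := by
    rw [Finset.sum_comm]
    refine Finset.sum_congr rfl fun j _ => ?_
    rw [← Finset.sum_mul, hPc, one_mul]
  have hs : ∑ j, x j = μ * ∑ j, x j := by
    have h := Finset.sum_congr (rfl : (Finset.univ : Finset (Fin n)) = _) fun i _ => key i
    rw [Finset.sum_add_distrib, ← Finset.mul_sum, hsP, ← Finset.sum_mul, ← Finset.mul_sum, hvc,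
      ← Finset.mul_sum] at h
    rw [← h]
    ring
  have hs0 : ∑ j, x j = 0 := by
    have h : (μ - 1) * ∑ j, x j = 0 := by linear_combination -hs
    exact (mul_eq_zero.mp h).resolve_left (sub_ne_zero.mpr hμ1)
  have k := key i
  rw [hs0, mul_zero, add_zero] at k
  simp only [Matrix.map_apply]
  rw [div_mul_eq_mul_div, eq_div_iff hα, ← k]
  ring
end

section
/- Let n ≥ 1, let P be an n×n real matrix with eᵀP = eᵀ, let 0 < α < 1, let v ∈ ℝⁿ satisfy eᵀv = 1, and set A = αP + (1−α)v eᵀ. Let U be an orthogonal n×n real matrix whose first column equals ê = e/√n. Then the matrix B = UᵀAU satisfies: B₁₁ = 1; B₁ⱼ = 0 for all j ≥ 2; and Bᵢⱼ = α·(UᵀPU)ᵢⱼ for all i, j ≥ 2. That is, B = [[1, 0], [w₁, αT]] where T is the lower-right (n−1)×(n−1) block of UᵀPU. -/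
open Matrix

/-- With `A = α•P + (1-α)•v eᵀ` and `U` orthogonal with first column
`e/√n`, the matrix `B = UᵀAU` has `B₁₁ = 1`, `B₁ⱼ = 0` for `j ≥ 2`, and lower-right
block equal to `α` times that of `UᵀPU`. -/
theorem google_similarity_block_form (n : ℕ) (hn : 1 ≤ n)
    (P U : Matrix (Fin n) (Fin n) ℝ)
    (hPcol : ∀ j, ∑ i, P i j = 1)
    (α : ℝ) (hα0 : 0 < α) (hα1 : α < 1)
    (v : Fin n → ℝ) (hvsum : ∑ i, v i = 1)
    (A : Matrix (Fin n) (Fin n) ℝ)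
    (hA : A = α • P + (1 - α) • Matrix.vecMulVec v (fun _ => (1 : ℝ)))
    (hU : Uᵀ * U = 1)
    (hUcol : ∀ i : Fin n, U i ⟨0, hn⟩ = 1 / Real.sqrt n) :
    (Uᵀ * A * U) ⟨0, hn⟩ ⟨0, hn⟩ = 1 ∧
    (∀ j : Fin n, j ≠ ⟨0, hn⟩ → (Uᵀ * A * U) ⟨0, hn⟩ j = 0) ∧
    (∀ i j : Fin n, i ≠ ⟨0, hn⟩ → j ≠ ⟨0, hn⟩ →
      (Uᵀ * A * U) i j = α * (Uᵀ * P * U) i j) := by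
  have hn0 : (0 : ℝ) < Real.sqrt n := Real.sqrt_pos.mpr (by exact_mod_cast hn)
  have hAcol : ∀ j, ∑ i, A i j = 1 := by
    intro j
    simp only [hA, Matrix.add_apply, Matrix.smul_apply, Matrix.vecMulVec_apply, smul_eq_mul,
      mul_one, Finset.sum_add_distrib, ← Finset.mul_sum, hPcol, hvsum]
    ring
  have hrow : ∀ j, (Uᵀ * A) ⟨0, hn⟩ j = Uᵀ ⟨0, hn⟩ j := by
    intro j
    simp only [Matrix.mul_apply, Matrix.transpose_apply, hUcol, ← Finset.mul_sum, hAcol, mul_one]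
  have hB : ∀ j, (Uᵀ * A * U) ⟨0, hn⟩ j = (1 : Matrix (Fin n) (Fin n) ℝ) ⟨0, hn⟩ j := by
    intro j
    rw [← hU, Matrix.mul_apply, Matrix.mul_apply]
    simp only [hrow]
  have hUs : ∀ j, j ≠ ⟨0, hn⟩ → ∑ i, U i j = 0 := by
    intro j hj
    have h := congrFun (congrFun hU ⟨0, hn⟩) j
    rw [Matrix.one_apply_ne hj.symm, Matrix.mul_apply] at h
    simp only [Matrix.transpose_apply, hUcol, ← Finset.mul_sum] at h
    exact (mul_eq_zero.mp h).resolve_left (by positivity)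
  refine ⟨by rw [hB, Matrix.one_apply_eq], fun j hj => by rw [hB, Matrix.one_apply_ne hj.symm], ?_⟩
  intro i j _ hj
  have hz : (Uᵀ * Matrix.vecMulVec v (fun _ : Fin n => (1 : ℝ)) * U) i j = 0 := by
    rw [Matrix.mul_vecMulVec, Matrix.vecMulVec_mul, Matrix.vecMulVec_apply]
    have : ((fun _ : Fin n => (1 : ℝ)) ᵥ* U) j = ∑ i, U i j := by
      simp [Matrix.vecMul, dotProduct]
    rw [this, hUs j hj, mul_zero]
  rw [hA, Matrix.mul_add, Matrix.add_mul, Matrix.mul_smul, Matrix.mul_smul, Matrix.smul_mul,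
    Matrix.smul_mul, Matrix.add_apply, Matrix.smul_apply, Matrix.smul_apply, hz]
  simp
end
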